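/- arXiv:2003.00372 — 3 statements merged into one kernel-verified Lean document; each statement's English description precedes it below -/
import Mathlib

section
/- Modulus Reduction Theorem: Let p be a polynomial with complex coefficients of degree n ≥ 2 and F(z) = |p(z)|². Let z₀ ∈ ℂ with p(z₀) ≠ 0, let k = k(z₀), u_k = u_k(z₀), c_k, C_k and θ be the Robust Newton parameters at z₀, and let z₁ = N̂_p(z₀) be the Robust Newton iterate. Then F(z₁) − F(z₀) ≤ −9·A(z₀)²·(C_k/3)^(k+1) ≤ −(1/2)·|u_k(z₀)|^(k+1)/(18^k·A(z₀)^(2k)). -/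
open Polynomial Filter Topology
open scoped Classical

noncomputable section

/-- The `j`-th derivative of `p`, evaluated at `z`. -/
def dEval (p : Polynomial ℂ) (j : ℕ) (z : ℂ) : ℂ :=
  (Polynomial.derivative^[j] p).eval z

/-- The index `k(z) = min {j ≥ 1 : p^{(j)}(z) ≠ 0}`. -/
def kIndex (p : Polynomial ℂ) (z : ℂ) : ℕ :=
  sInf {j : ℕ | 1 ≤ j ∧ dEval p j z ≠ 0}

/-- `A(z) = max {|p^{(j)}(z)|/j! : j = 0, …, n}`, where `n` is the degree of `p`. -/
def Amax (p : Polynomial ℂ) (z : ℂ) : ℝ :=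
  (Finset.range (p.natDegree + 1)).sup' Finset.nonempty_range_add_one
    (fun j => ‖dEval p j z‖ / (Nat.factorial j))

/-- `u_m = (1/m!) · p(z) · conj(p^{(m)}(z))`. -/
def uPar (p : Polynomial ℂ) (m : ℕ) (z : ℂ) : ℂ :=
  (1 / (Nat.factorial m : ℂ)) * p.eval z * (starRingEnd ℂ) (dEval p m z)

/-- `γ = 2 · Re(u_m^(m-1))`. -/
def gammaPar (p : Polynomial ℂ) (m : ℕ) (z : ℂ) : ℝ :=
  2 * ((uPar p m z) ^ (m - 1)).re

/-- `δ = -2 · Im(u_m^(m-1))`. -/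
def deltaPar (p : Polynomial ℂ) (m : ℕ) (z : ℂ) : ℝ :=
  -2 * ((uPar p m z) ^ (m - 1)).im

/-- `c_m = max {|γ|, |δ|}`. -/
def cPar (p : Polynomial ℂ) (m : ℕ) (z : ℂ) : ℝ :=
  max |gammaPar p m z| |deltaPar p m z|

/-- The angle `θ`: `0` if `c = |γ|, γ < 0`; `π/m` if `c = |γ|, γ > 0`;
`π/(2m)` if `c = |δ|, δ < 0`; `3π/(2m)` if `c = |δ|, δ > 0`. -/
def thetaPar (p : Polynomial ℂ) (m : ℕ) (z : ℂ) : ℝ :=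
  if cPar p m z = |gammaPar p m z| then
    if gammaPar p m z < 0 then 0 else Real.pi / m
  else
    if deltaPar p m z < 0 then Real.pi / (2 * m) else 3 * Real.pi / (2 * m)

/-- `C_m = c_m · |u_m|^(2-m) / (6 · A(z)²)`. -/
def CPar (p : Polynomial ℂ) (m : ℕ) (z : ℂ) : ℝ :=
  cPar p m z * ‖uPar p m z‖ ^ ((2 : ℤ) - (m : ℤ)) / (6 * (Amax p z) ^ 2)

/-- The Robust Newton iterate with prescribed index `m`:
`z + (C_m/3) · (u_m/|u_m|) · e^(iθ)`. -/
def rniWith (p : Polynomial ℂ) (m : ℕ) (z : ℂ) : ℂ :=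
  z + (↑(CPar p m z / 3) : ℂ) * (uPar p m z / (↑(‖uPar p m z‖) : ℂ)) *
    Complex.exp ((↑(thetaPar p m z) : ℂ) * Complex.I)

/-- The Robust Newton iterate `N̂_p(z)`. -/
def RN (p : Polynomial ℂ) (z : ℂ) : ℂ := rniWith p (kIndex p z) z

/-- The RNM orbit of the seed `z₀`: `z_{t+1} = N̂_p(z_t)` when `p(z_t) ≠ 0`,
and `z_{t+1} = z_t` when `p(z_t) = 0`. -/
def rnmOrbit (p : Polynomial ℂ) (z₀ : ℂ) : ℕ → ℂ
  | 0 => z₀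
  | t + 1 =>
      if p.eval (rnmOrbit p z₀ t) = 0 then rnmOrbit p z₀ t
      else RN p (rnmOrbit p z₀ t)

/-!
Let `aⱼ = p⁽ʲ⁾(z)/j!` be the Taylor coefficients of `p` at `z` and `r = C_k/3` the length of the
step `h`. Since `a₁ = ⋯ = a_{k-1} = 0` and `|aⱼ| ≤ A`, one has `p(z + h) = a₀ + a_k hᵏ + e` with
`|e| ≤ A rᵏ⁺¹/(1 - r)`. The first-order term of `F(z + h) - F(z)` is `2 Re(conj a₀ · a_k hᵏ)`, and
`conj a₀ · a_k = conj u_k`. The angle `θ` rotates `u_kᵏ⁻¹` by a multiple of a quarter turn so that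
twice its real part becomes `-c_k`, the most negative value available; the radius is chosen so that
the first-order term is exactly `-18 A² rᵏ⁺¹`. As `r ≤ 1/9`, the remaining terms cost less than half
of this gain. The second inequality is the bound `|u_k|/(18 A²) ≤ r`, that is, `|u_k|ᵏ⁻¹ ≤ c_k`.
-/

lemma norm_eval_sub_sum_range_le {R : Type*} [SeminormedRing R] [NormOneClass R] (q : R[X])
    {A : ℝ} (hA : ∀ j, ‖q.coeff j‖ ≤ A) {h : R} (hh : ‖h‖ < 1) (n : ℕ) :
    ‖q.eval h - ∑ j ∈ Finset.range n, q.coeff j * h ^ j‖ ≤ A * (‖h‖ ^ n / (1 - ‖h‖)) := by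
  have hA0 : 0 ≤ A := (norm_nonneg _).trans (hA 0)
  have htail : q.eval h - ∑ j ∈ Finset.range n, q.coeff j * h ^ j
      = ∑ j ∈ Finset.Ico n (n + (q.natDegree + 1)), q.coeff j * h ^ j := by
    rw [eval_eq_sum_range' (show q.natDegree < n + (q.natDegree + 1) by omega),
      Finset.sum_Ico_eq_sub _ (Nat.le_add_right _ _)]
  calc ‖q.eval h - ∑ j ∈ Finset.range n, q.coeff j * h ^ j‖
      = ‖∑ j ∈ Finset.Ico n (n + (q.natDegree + 1)), q.coeff j * h ^ j‖ := by rw [htail]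
    _ ≤ ∑ j ∈ Finset.Ico n (n + (q.natDegree + 1)), A * ‖h‖ ^ j := by
        refine norm_sum_le_of_le _ fun j _ => (norm_mul_le _ _).trans ?_
        exact mul_le_mul (hA j) (norm_pow_le h j) (norm_nonneg _) hA0
    _ = A * ∑ j ∈ Finset.Ico n (n + (q.natDegree + 1)), ‖h‖ ^ j := by rw [Finset.mul_sum]
    _ ≤ A * (‖h‖ ^ n / (1 - ‖h‖)) := by
        gcongr
        exact geom_sum_Ico_le_of_lt_one (norm_nonneg h) hh

lemma sum_range_succ_coeff_mul_pow_eq {R : Type*} [Semiring R] {q : R[X]} {k : ℕ} (hk : k ≠ 0)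
    (hq : ∀ j, 1 ≤ j → j < k → q.coeff j = 0) (h : R) :
    ∑ j ∈ Finset.range (k + 1), q.coeff j * h ^ j = q.coeff 0 + q.coeff k * h ^ k := by
  have hlow : ∑ j ∈ Finset.range k, q.coeff j * h ^ j = q.coeff 0 * h ^ 0 := by
    refine Finset.sum_eq_single_of_mem 0 (Finset.mem_range.mpr (Nat.pos_of_ne_zero hk)) ?_
    intro j hj hj0
    rw [hq j (Nat.one_le_iff_ne_zero.mpr hj0) (Finset.mem_range.mp hj), zero_mul]
  rw [Finset.sum_range_succ, hlow, pow_zero, mul_one]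

section Descent

variable {𝕜 : Type*} [RCLike 𝕜]

open scoped InnerProductSpace

lemma norm_add_sq_sub_norm_sq_le_of_re_inner_le {E : Type*} [SeminormedAddCommGroup E]
    [InnerProductSpace 𝕜 E] {x w e : E} {A r s : ℝ} (hs : 0 ≤ s) (hsr : s ≤ r) (hr : r ≤ 1 / 9)
    (hx : ‖x‖ ≤ A) (hw : ‖w‖ ≤ A * s) (he : ‖e‖ ≤ 9 / 8 * (A * (r * s)))
    (hxw : RCLike.re ⟪x, w⟫_𝕜 ≤ -(9 * A ^ 2 * (r * s))) :
    ‖x + (w + e)‖ ^ 2 - ‖x‖ ^ 2 ≤ -(9 * A ^ 2 * (r * s)) := by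
  have hA : 0 ≤ A := (norm_nonneg x).trans hx
  have hexpand : ‖x + (w + e)‖ ^ 2 - ‖x‖ ^ 2
      = 2 * RCLike.re ⟪x, w⟫_𝕜 + 2 * RCLike.re ⟪x, e⟫_𝕜 + ‖w + e‖ ^ 2 := by
    rw [norm_add_sq (𝕜 := 𝕜), inner_add_right, map_add]
    ring
  have hxe : RCLike.re ⟪x, e⟫_𝕜 ≤ 9 / 8 * (A ^ 2 * (r * s)) :=
    calc RCLike.re ⟪x, e⟫_𝕜 ≤ ‖x‖ * ‖e‖ := re_inner_le_norm x e
      _ ≤ A * (9 / 8 * (A * (r * s))) := by gcongr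
      _ = 9 / 8 * (A ^ 2 * (r * s)) := by ring
  have hwe : ‖w + e‖ ≤ 9 / 8 * (A * s) :=
    calc ‖w + e‖ ≤ A * s + 9 / 8 * (A * (r * s)) := norm_add_le_of_le hw he
      _ ≤ A * s + 9 / 8 * (A * (1 / 9 * s)) := by gcongr
      _ = 9 / 8 * (A * s) := by ring
  have hwe_sq : ‖w + e‖ ^ 2 ≤ 81 / 64 * (A ^ 2 * (r * s)) :=
    calc ‖w + e‖ ^ 2 ≤ (9 / 8 * (A * s)) ^ 2 := by gcongr
      _ = 81 / 64 * (A ^ 2 * (s * s)) := by ring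
      _ ≤ 81 / 64 * (A ^ 2 * (r * s)) := by gcongr
  have hgain : 0 ≤ A ^ 2 * (r * s) := mul_nonneg (sq_nonneg A) (mul_nonneg (hs.trans hsr) hs)
  linarith

lemma norm_eval_sq_sub_le_of_re_inner_le {q : 𝕜[X]} {k : ℕ} {A : ℝ} {h : 𝕜} (hk : k ≠ 0)
    (hq : ∀ j, 1 ≤ j → j < k → q.coeff j = 0) (hA : ∀ j, ‖q.coeff j‖ ≤ A) (hh : ‖h‖ ≤ 1 / 9)
    (hdescent : RCLike.re ⟪q.coeff 0, q.coeff k * h ^ k⟫_𝕜 ≤ -(9 * A ^ 2 * ‖h‖ ^ (k + 1))) :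
    ‖q.eval h‖ ^ 2 - ‖q.coeff 0‖ ^ 2 ≤ -(9 * A ^ 2 * ‖h‖ ^ (k + 1)) := by
  have hA0 : 0 ≤ A := (norm_nonneg _).trans (hA 0)
  set e := q.eval h - (q.coeff 0 + q.coeff k * h ^ k) with he_def
  have heval : q.eval h = q.coeff 0 + (q.coeff k * h ^ k + e) := by rw [he_def]; ring
  have hk_term : ‖q.coeff k * h ^ k‖ ≤ A * ‖h‖ ^ k := by
    rw [norm_mul, norm_pow]
    gcongr
    exact hA k
  have he : ‖e‖ ≤ 9 / 8 * (A * (‖h‖ * ‖h‖ ^ k)) :=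
    calc ‖e‖ ≤ A * (‖h‖ ^ (k + 1) / (1 - ‖h‖)) := by
          rw [he_def, ← sum_range_succ_coeff_mul_pow_eq hk hq]
          exact norm_eval_sub_sum_range_le q hA (by linarith) (k + 1)
      _ ≤ A * (‖h‖ ^ (k + 1) / (8 / 9)) := by
          gcongr
          linarith
      _ = 9 / 8 * (A * (‖h‖ * ‖h‖ ^ k)) := by ring
  rw [pow_succ' ‖h‖] at hdescent ⊢
  rw [heval]
  exact norm_add_sq_sub_norm_sq_le_of_re_inner_le (by positivity)
    (pow_le_of_le_one (norm_nonneg h) (by linarith) hk) hh (hA 0) hk_term he hdescent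

end Descent

lemma pow_sub_one_mul_zpow_two_sub {G : Type*} [GroupWithZero G] {x : G} (hx : x ≠ 0) {m : ℕ}
    (hm : m ≠ 0) : x ^ (m - 1) * x ^ ((2 : ℤ) - m) = x := by
  rw [← zpow_natCast, ← zpow_add₀ hx, show ((m - 1 : ℕ) : ℤ) + (2 - m) = 1 by omega, zpow_one]

lemma conj_mul_div_norm_pow {𝕜 : Type*} [RCLike 𝕜] {u : 𝕜} (hu : u ≠ 0) {m : ℕ} (hm : m ≠ 0) :
    (starRingEnd 𝕜) u * (u / (‖u‖ : 𝕜)) ^ m = ((‖u‖ ^ ((2 : ℤ) - m) : ℝ) : 𝕜) * u ^ (m - 1) := by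
  have hnorm : (‖u‖ : 𝕜) ≠ 0 := RCLike.ofReal_ne_zero.mpr (norm_ne_zero_iff.mpr hu)
  calc (starRingEnd 𝕜) u * (u / (‖u‖ : 𝕜)) ^ m
      = ((starRingEnd 𝕜) u * u) * u ^ (m - 1) / (‖u‖ : 𝕜) ^ m := by
        rw [div_pow, ← mul_pow_sub_one hm u]
        ring
    _ = (‖u‖ : 𝕜) ^ 2 / (‖u‖ : 𝕜) ^ m * u ^ (m - 1) := by
        rw [RCLike.conj_mul]
        ring
    _ = ((‖u‖ ^ ((2 : ℤ) - m) : ℝ) : 𝕜) * u ^ (m - 1) := by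
        rw [RCLike.ofReal_zpow, zpow_sub₀ hnorm, zpow_natCast, zpow_ofNat]

lemma exp_ofReal_div_natCast_mul_I_pow {m : ℕ} (hm : m ≠ 0) (φ : ℝ) :
    Complex.exp ((φ / m : ℝ) * Complex.I) ^ m = Complex.exp (φ * Complex.I) := by
  have hm' : (m : ℂ) ≠ 0 := Nat.cast_ne_zero.mpr hm
  rw [← Complex.exp_nat_mul]
  congr 1
  push_cast
  field_simp

section RobustNewton

variable {p : ℂ[X]} {m : ℕ} {z : ℂ}

lemma coeff_taylor_eq_dEval_div_factorial (p : ℂ[X]) (j : ℕ) (z : ℂ) :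
    (taylor z p).coeff j = dEval p j z / (j.factorial : ℂ) := by
  rw [eq_div_iff (Nat.cast_ne_zero.mpr j.factorial_ne_zero), taylor_coeff, dEval,
    ← factorial_smul_hasseDeriv, LinearMap.smul_apply, eval_smul, nsmul_eq_mul, mul_comm]

lemma norm_coeff_taylor_le_Amax (p : ℂ[X]) (z : ℂ) (j : ℕ) :
    ‖(taylor z p).coeff j‖ ≤ Amax p z := by
  have hle : ∀ i ≤ p.natDegree, ‖(taylor z p).coeff i‖ ≤ Amax p z := by
    intro i hi
    rw [coeff_taylor_eq_dEval_div_factorial, norm_div, Complex.norm_natCast]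
    exact Finset.le_sup' (fun i => ‖dEval p i z‖ / (i.factorial : ℝ))
      (Finset.mem_range_succ_iff.mpr hi)
  rcases le_or_gt j p.natDegree with hj | hj
  · exact hle j hj
  · rw [coeff_eq_zero_of_natDegree_lt (by rwa [natDegree_taylor]), norm_zero]
    exact (norm_nonneg _).trans (hle 0 (Nat.zero_le _))

lemma uPar_eq_coeff_taylor_mul_conj (p : ℂ[X]) (m : ℕ) (z : ℂ) :
    uPar p m z = (taylor z p).coeff 0 * (starRingEnd ℂ) ((taylor z p).coeff m) := by
  rw [taylor_coeff_zero, coeff_taylor_eq_dEval_div_factorial, uPar, map_div₀, Complex.conj_natCast]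
  ring

lemma norm_uPar_le_Amax_sq (p : ℂ[X]) (m : ℕ) (z : ℂ) : ‖uPar p m z‖ ≤ Amax p z ^ 2 := by
  have hA : 0 ≤ Amax p z := (norm_nonneg _).trans (norm_coeff_taylor_le_Amax p z 0)
  rw [uPar_eq_coeff_taylor_mul_conj, norm_mul, Complex.norm_conj, sq]
  gcongr <;> exact norm_coeff_taylor_le_Amax p z _

lemma Amax_pos (hu : uPar p m z ≠ 0) : 0 < Amax p z := by
  rw [uPar_eq_coeff_taylor_mul_conj] at hu
  exact (norm_pos_iff.mpr (left_ne_zero_of_mul hu)).trans_le (norm_coeff_taylor_le_Amax p z 0)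

lemma kIndex_mem (hdeg : p.natDegree ≠ 0) (z : ℂ) :
    kIndex p z ∈ {j : ℕ | 1 ≤ j ∧ dEval p j z ≠ 0} := by
  refine Nat.sInf_mem ⟨p.natDegree, Nat.one_le_iff_ne_zero.mpr hdeg, fun hzero => ?_⟩
  have hlead : p.leadingCoeff = 0 := by
    rw [← coeff_taylor_natDegree (r := z), coeff_taylor_eq_dEval_div_factorial, hzero, zero_div]
  exact hdeg (by rw [leadingCoeff_eq_zero.mp hlead, natDegree_zero])

lemma kIndex_ne_zero (hdeg : p.natDegree ≠ 0) (z : ℂ) : kIndex p z ≠ 0 :=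
  Nat.one_le_iff_ne_zero.mp (kIndex_mem hdeg z).1

lemma dEval_eq_zero_of_lt_kIndex {j : ℕ} (hj : 1 ≤ j) (hlt : j < kIndex p z) : dEval p j z = 0 :=
  by_contra fun hne => Nat.notMem_of_lt_sInf hlt ⟨hj, hne⟩

lemma uPar_kIndex_ne_zero (hdeg : p.natDegree ≠ 0) (hp : p.eval z ≠ 0) :
    uPar p (kIndex p z) z ≠ 0 := by
  have hfact : ((kIndex p z).factorial : ℂ) ≠ 0 := Nat.cast_ne_zero.mpr (Nat.factorial_ne_zero _)
  exact mul_ne_zero (mul_ne_zero (one_div_ne_zero hfact) hp)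
    ((_root_.map_ne_zero _).mpr (kIndex_mem hdeg z).2)

lemma cPar_le_two_mul_norm_uPar_pow (p : ℂ[X]) (m : ℕ) (z : ℂ) :
    cPar p m z ≤ 2 * ‖uPar p m z‖ ^ (m - 1) := by
  rw [← norm_pow, cPar, gammaPar, deltaPar, abs_mul, abs_mul, abs_neg, abs_two]
  refine max_le ?_ ?_ <;> gcongr
  exacts [Complex.abs_re_le_norm _, Complex.abs_im_le_norm _]

lemma norm_uPar_pow_le_cPar (p : ℂ[X]) (m : ℕ) (z : ℂ) :
    ‖uPar p m z‖ ^ (m - 1) ≤ cPar p m z := by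
  have hγ : |gammaPar p m z| ≤ cPar p m z := le_max_left _ _
  have hδ : |deltaPar p m z| ≤ cPar p m z := le_max_right _ _
  rw [gammaPar, abs_mul, abs_two] at hγ
  rw [deltaPar, abs_mul, abs_neg, abs_two] at hδ
  rw [← norm_pow]
  linarith [Complex.norm_le_abs_re_add_abs_im (uPar p m z ^ (m - 1))]

lemma two_mul_re_uPar_pow_mul_exp_thetaPar_pow (p : ℂ[X]) (hm : m ≠ 0) (z : ℂ) :
    2 * (uPar p m z ^ (m - 1) * Complex.exp (thetaPar p m z * Complex.I) ^ m).re
      = -cPar p m z := by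
  have hδ (h : cPar p m z ≠ |gammaPar p m z|) : cPar p m z = |deltaPar p m z| :=
    (max_choice _ _).resolve_left h
  unfold thetaPar
  split_ifs with hc hneg hneg
  · rw [hc, abs_of_neg hneg]
    simp [gammaPar]
  · rw [hc, abs_of_nonneg (not_lt.mp hneg), exp_ofReal_div_natCast_mul_I_pow hm,
      Complex.exp_pi_mul_I]
    simp [gammaPar]
  · rw [hδ hc, abs_of_neg hneg, ← div_div, exp_ofReal_div_natCast_mul_I_pow hm, Complex.ofReal_div,
      Complex.ofReal_ofNat, Complex.exp_pi_div_two_mul_I]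
    simp [deltaPar]
  · have hturn : Complex.exp ((3 * Real.pi / 2 : ℝ) * Complex.I) = -Complex.I := by
      rw [show ((3 * Real.pi / 2 : ℝ) : ℂ) * Complex.I
          = Real.pi * Complex.I + Real.pi / 2 * Complex.I by push_cast; ring,
        Complex.exp_add, Complex.exp_pi_mul_I, Complex.exp_pi_div_two_mul_I, neg_one_mul]
    rw [hδ hc, abs_of_nonneg (not_lt.mp hneg), ← div_div, exp_ofReal_div_natCast_mul_I_pow hm,
      hturn]
    simp [deltaPar]

lemma cPar_mul_zpow_eq (hu : uPar p m z ≠ 0) :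
    cPar p m z * ‖uPar p m z‖ ^ ((2 : ℤ) - m) = 6 * Amax p z ^ 2 * CPar p m z := by
  have hA : 0 < Amax p z := Amax_pos hu
  rw [CPar]
  field_simp

lemma norm_uPar_div_le_CPar (hm : m ≠ 0) (hu : uPar p m z ≠ 0) :
    ‖uPar p m z‖ / (6 * Amax p z ^ 2) ≤ CPar p m z := by
  have hA : 0 < Amax p z := Amax_pos hu
  rw [div_le_iff₀' (by positivity), ← cPar_mul_zpow_eq hu]
  calc ‖uPar p m z‖ = ‖uPar p m z‖ ^ (m - 1) * ‖uPar p m z‖ ^ ((2 : ℤ) - m) :=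
        (pow_sub_one_mul_zpow_two_sub (norm_ne_zero_iff.mpr hu) hm).symm
    _ ≤ cPar p m z * ‖uPar p m z‖ ^ ((2 : ℤ) - m) := by
        gcongr
        exact norm_uPar_pow_le_cPar p m z

lemma CPar_nonneg (p : ℂ[X]) (m : ℕ) (z : ℂ) : 0 ≤ CPar p m z := by
  have hc : 0 ≤ cPar p m z := (abs_nonneg _).trans (le_max_left _ _)
  unfold CPar
  positivity

lemma CPar_le_one_third (hm : m ≠ 0) (hu : uPar p m z ≠ 0) : CPar p m z ≤ 1 / 3 := by
  have hle : 6 * Amax p z ^ 2 * CPar p m z ≤ 2 * Amax p z ^ 2 :=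
    calc 6 * Amax p z ^ 2 * CPar p m z
        = cPar p m z * ‖uPar p m z‖ ^ ((2 : ℤ) - m) := (cPar_mul_zpow_eq hu).symm
      _ ≤ 2 * ‖uPar p m z‖ ^ (m - 1) * ‖uPar p m z‖ ^ ((2 : ℤ) - m) := by
          gcongr
          exact cPar_le_two_mul_norm_uPar_pow p m z
      _ = 2 * ‖uPar p m z‖ := by
          rw [mul_assoc, pow_sub_one_mul_zpow_two_sub (norm_ne_zero_iff.mpr hu) hm]
      _ ≤ 2 * Amax p z ^ 2 := by
          gcongr
          exact norm_uPar_le_Amax_sq p m z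
  nlinarith [pow_pos (Amax_pos hu) 2]

lemma norm_uPar_pow_div_le (hm : m ≠ 0) (hu : uPar p m z ≠ 0) :
    1 / 2 * ‖uPar p m z‖ ^ (m + 1) / (18 ^ m * Amax p z ^ (2 * m))
      ≤ 9 * Amax p z ^ 2 * (CPar p m z / 3) ^ (m + 1) := by
  have hA : 0 < Amax p z := Amax_pos hu
  calc 1 / 2 * ‖uPar p m z‖ ^ (m + 1) / (18 ^ m * Amax p z ^ (2 * m))
      = 9 * Amax p z ^ 2 * (‖uPar p m z‖ / (6 * Amax p z ^ 2) / 3) ^ (m + 1) := by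
        rw [div_div, show 6 * Amax p z ^ 2 * 3 = 18 * Amax p z ^ 2 by ring, div_pow, mul_pow,
          pow_mul, pow_succ 18, pow_succ (Amax p z ^ 2)]
        field_simp
        norm_num
    _ ≤ 9 * Amax p z ^ 2 * (CPar p m z / 3) ^ (m + 1) := by
        gcongr
        exact norm_uPar_div_le_CPar hm hu

/-- The displacement `(C_m/3) · (u_m/|u_m|) · e^(iθ)` by which the Robust Newton iteration with
prescribed index `m` moves `z`. -/
def robustStep (p : ℂ[X]) (m : ℕ) (z : ℂ) : ℂ :=
  ((CPar p m z / 3 : ℝ) : ℂ) * (uPar p m z / (‖uPar p m z‖ : ℂ)) *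
    Complex.exp (thetaPar p m z * Complex.I)

lemma norm_robustStep (hu : uPar p m z ≠ 0) : ‖robustStep p m z‖ = CPar p m z / 3 := by
  rw [robustStep, norm_mul, norm_mul, norm_div, Complex.norm_exp_ofReal_mul_I, Complex.norm_real,
    Complex.norm_real, norm_norm, div_self (norm_ne_zero_iff.mpr hu), mul_one, mul_one,
    Real.norm_of_nonneg (div_nonneg (CPar_nonneg p m z) zero_le_three)]

lemma re_conj_uPar_mul_robustStep_pow (hm : m ≠ 0) (hu : uPar p m z ≠ 0) :
    ((starRingEnd ℂ) (uPar p m z) * robustStep p m z ^ m).re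
      = -(9 * Amax p z ^ 2 * (CPar p m z / 3) ^ (m + 1)) := by
  set u := uPar p m z
  set r := CPar p m z / 3
  set E := Complex.exp (thetaPar p m z * Complex.I)
  have hpolar : (starRingEnd ℂ) u * robustStep p m z ^ m
      = ((r ^ m * ‖u‖ ^ ((2 : ℤ) - m) : ℝ) : ℂ) * (u ^ (m - 1) * E ^ m) :=
    calc (starRingEnd ℂ) u * robustStep p m z ^ m
        = (r : ℂ) ^ m * ((starRingEnd ℂ) u * (u / (‖u‖ : ℂ)) ^ m) * E ^ m := by
          rw [robustStep, mul_pow, mul_pow]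
          ring
      _ = (r : ℂ) ^ m * (((‖u‖ ^ ((2 : ℤ) - m) : ℝ) : ℂ) * u ^ (m - 1)) * E ^ m :=
          congrArg (fun w => (r : ℂ) ^ m * w * E ^ m) (conj_mul_div_norm_pow hu hm)
      _ = ((r ^ m * ‖u‖ ^ ((2 : ℤ) - m) : ℝ) : ℂ) * (u ^ (m - 1) * E ^ m) := by
          push_cast
          ring
  have hrot : (u ^ (m - 1) * E ^ m).re = -cPar p m z / 2 := by
    linarith [two_mul_re_uPar_pow_mul_exp_thetaPar_pow p hm z]
  calc ((starRingEnd ℂ) u * robustStep p m z ^ m).re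
      = r ^ m * ‖u‖ ^ ((2 : ℤ) - m) * (-cPar p m z / 2) := by
        rw [hpolar, Complex.re_ofReal_mul, hrot]
    _ = -(r ^ m * (cPar p m z * ‖u‖ ^ ((2 : ℤ) - m)) / 2) := by ring
    _ = -(9 * Amax p z ^ 2 * r ^ (m + 1)) := by
        rw [cPar_mul_zpow_eq hu]
        ring

lemma norm_eval_rniWith_sq_sub_le (hm : m ≠ 0) (hu : uPar p m z ≠ 0)
    (hlow : ∀ j, 1 ≤ j → j < m → dEval p j z = 0) :
    ‖p.eval (rniWith p m z)‖ ^ 2 - ‖p.eval z‖ ^ 2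
      ≤ -(9 * Amax p z ^ 2 * (CPar p m z / 3) ^ (m + 1)) := by
  have heval : (taylor z p).eval (robustStep p m z) = p.eval (rniWith p m z) := by
    rw [taylor_eval, add_comm, rniWith, robustStep]
  have hcoeff (j : ℕ) (hj : 1 ≤ j) (hjm : j < m) : (taylor z p).coeff j = 0 := by
    rw [coeff_taylor_eq_dEval_div_factorial, hlow j hj hjm, zero_div]
  have hinner : inner ℂ ((taylor z p).coeff 0) ((taylor z p).coeff m * robustStep p m z ^ m)
      = (starRingEnd ℂ) (uPar p m z) * robustStep p m z ^ m := by
    rw [RCLike.inner_apply', uPar_eq_coeff_taylor_mul_conj, map_mul, Complex.conj_conj, mul_assoc]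
  rw [← heval, ← taylor_coeff_zero (f := p) (r := z), ← norm_robustStep hu]
  refine norm_eval_sq_sub_le_of_re_inner_le hm hcoeff (norm_coeff_taylor_le_Amax p z) ?_ ?_
  · rw [norm_robustStep hu]
    linarith [CPar_le_one_third hm hu]
  · rw [hinner, norm_robustStep hu]
    exact (re_conj_uPar_mul_robustStep_pow hm hu).le

end RobustNewton

/-- **Modulus Reduction Theorem.** For a polynomial `p` of degree `n ≥ 2` and a point `z₀`
with `p(z₀) ≠ 0`, the Robust Newton iterate `z₁ = N̂_p(z₀)` satisfies
`F(z₁) − F(z₀) ≤ −9·A(z₀)²·(C_k/3)^(k+1) ≤ −(1/2)·|u_k|^(k+1)/(18^k·A(z₀)^(2k))`. -/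
theorem modulus_reduction (p : Polynomial ℂ) (hdeg : 2 ≤ p.natDegree)
    (z₀ : ℂ) (hp : p.eval z₀ ≠ 0) :
    ‖p.eval (RN p z₀)‖ ^ 2 - ‖p.eval z₀‖ ^ 2 ≤
      -(9 * (Amax p z₀) ^ 2 * (CPar p (kIndex p z₀) z₀ / 3) ^ (kIndex p z₀ + 1)) ∧
    -(9 * (Amax p z₀) ^ 2 * (CPar p (kIndex p z₀) z₀ / 3) ^ (kIndex p z₀ + 1)) ≤
      -(1 / 2 * ‖uPar p (kIndex p z₀) z₀‖ ^ (kIndex p z₀ + 1) /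
        (18 ^ (kIndex p z₀) * (Amax p z₀) ^ (2 * kIndex p z₀))) := by
  have hk : kIndex p z₀ ≠ 0 := kIndex_ne_zero (by omega) z₀
  have hu : uPar p (kIndex p z₀) z₀ ≠ 0 := uPar_kIndex_ne_zero (by omega) hp
  refine ⟨?_, neg_le_neg (norm_uPar_pow_div_le hk hu)⟩
  exact norm_eval_rniWith_sq_sub_le hk hu fun j => dEval_eq_zero_of_lt_kIndex
end
end

section
/- Auxiliary Lemma for Selection of Descent Direction: Let u ∈ ℂ be nonzero and k a natural number with k ≥ 1. Define G_k(z) = conj(u)·z^k + u·conj(z)^k, γ = 2·Re(u^(k−1)), δ = −2·Im(u^(k−1)), c = max{|γ|, |δ|}, and let θ = 0 if c = |γ| and γ < 0, θ = π/k if c = |γ| and γ > 0, θ = π/(2k) if c = |δ| and δ < 0, θ = 3π/(2k) if c = |δ| and δ > 0. Then c > 0 and for every real α > 0, G_k(α·u·e^(iθ)) = −c·|u|²·α^k, which is strictly negative. -/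
open scoped Classical

/-!
Put `w = u ^ (k - 1)`. Since `conj u * u = ‖u‖ ^ 2`, evaluating `G_k` at `u * v` gives
`2 * ‖u‖ ^ 2 * Re (w * v ^ k)`. For `v = α * exp (θ * I)` the power `v ^ k` is `α ^ k` times a
rotation by `k * θ`, and `θ` is chosen so that this rotation, through a multiple of `π / 2`, turns
the dominant coordinate of `w` onto the negative real axis. The real part of the rotated `w` is
then `-max |Re w| |Im w|`, which is nonzero because `w` is.
-/

open scoped ComplexConjugate

/-- The function `G_k(z) = conj(u)·z^k + u·conj(z)^k` attached to `u`. It is complex-valued here, as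
in the statement; `conjPowForm_eq_two_mul_re` shows that its values are real. -/
noncomputable def conjPowForm (u : ℂ) (k : ℕ) (z : ℂ) : ℂ :=
  conj u * z ^ k + u * conj z ^ k

/-- An angle in `{0, π/2, π, 3π/2}` whose rotation carries the coordinate of `w` of larger absolute
value to the negative real axis; ties go to the real part. It is `k` times the angle `θ` of the
descent direction when `w = u ^ (k - 1)`. -/
noncomputable def descentPhase (w : ℂ) : ℝ :=
  if |w.im| ≤ |w.re| then (if w.re < 0 then 0 else Real.pi)
  else (if 0 < w.im then Real.pi / 2 else 3 * Real.pi / 2)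

theorem conjPowForm_eq_two_mul_re (u : ℂ) (k : ℕ) (z : ℂ) :
    conjPowForm u k z = ((2 * (conj u * z ^ k).re : ℝ) : ℂ) := by
  rw [← Complex.add_conj]
  simp only [conjPowForm, map_mul, map_pow, Complex.conj_conj]

theorem conjPowForm_succ_mul (u : ℂ) (n : ℕ) (v : ℂ) :
    conjPowForm u (n + 1) (u * v) = ((2 * (‖u‖ ^ 2 * (u ^ n * v ^ (n + 1)).re) : ℝ) : ℂ) := by
  have h : conj u * (u * v) ^ (n + 1) = ((‖u‖ ^ 2 : ℝ) : ℂ) * (u ^ n * v ^ (n + 1)) := by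
    rw [Complex.ofReal_pow, ← Complex.conj_mul']
    ring
  rw [conjPowForm_eq_two_mul_re, h, Complex.re_ofReal_mul]

theorem re_mul_exp_mul_I (w : ℂ) (φ : ℝ) :
    (w * Complex.exp (φ * Complex.I)).re = w.re * Real.cos φ - w.im * Real.sin φ := by
  rw [Complex.mul_re, Complex.exp_ofReal_mul_I_re, Complex.exp_ofReal_mul_I_im]

theorem re_mul_exp_descentPhase (w : ℂ) :
    (w * Complex.exp (descentPhase w * Complex.I)).re = -max |w.re| |w.im| := by
  have h_three_pi : 3 * Real.pi / 2 = Real.pi / 2 + Real.pi := by ring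
  rw [re_mul_exp_mul_I, descentPhase]
  split_ifs with hdom hre him
  · rw [max_eq_left hdom, abs_of_neg hre]
    simp
  · rw [max_eq_left hdom, abs_of_nonneg (not_lt.mp hre)]
    simp
  · rw [max_eq_right (not_le.mp hdom).le, abs_of_pos him]
    simp
  · rw [max_eq_right (not_le.mp hdom).le, abs_of_nonpos (not_lt.mp him), h_three_pi,
      Real.cos_add_pi, Real.sin_add_pi]
    simp

theorem max_abs_re_abs_im_pos {w : ℂ} (hw : w ≠ 0) : 0 < max |w.re| |w.im| := by
  rw [lt_max_iff, abs_pos, abs_pos, ← not_and_or]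
  exact fun h => hw (Complex.ext h.1 h.2)

theorem descentPhase_eq_ite (w : ℂ) :
    descentPhase w =
      if max |2 * w.re| |-2 * w.im| = |2 * w.re| then (if 2 * w.re < 0 then 0 else Real.pi)
      else (if -2 * w.im < 0 then Real.pi / 2 else 3 * Real.pi / 2) := by
  norm_num [descentPhase, abs_mul, mul_neg_iff]

theorem conjPowForm_eq_of_mul_eq_descentPhase (u : ℂ) (n : ℕ) (α θ : ℝ)
    (hθ : ((n + 1 : ℕ) : ℝ) * θ = descentPhase (u ^ n)) :
    conjPowForm u (n + 1) (α * u * Complex.exp (θ * Complex.I)) =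
      ((-(2 * max |(u ^ n).re| |(u ^ n).im| * ‖u‖ ^ 2 * α ^ (n + 1)) : ℝ) : ℂ) := by
  have hexp : Complex.exp (θ * Complex.I) ^ (n + 1) =
      Complex.exp (descentPhase (u ^ n) * Complex.I) := by
    rw [← Complex.exp_nat_mul, ← mul_assoc, ← hθ, Complex.ofReal_mul, Complex.ofReal_natCast]
  have hpow : u ^ n * (α * Complex.exp (θ * Complex.I)) ^ (n + 1) =
      ((α ^ (n + 1) : ℝ) : ℂ) * (u ^ n * Complex.exp (descentPhase (u ^ n) * Complex.I)) := by
    rw [mul_pow, hexp, Complex.ofReal_pow, mul_left_comm]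
  rw [mul_comm (α : ℂ) u, mul_assoc, conjPowForm_succ_mul, hpow, Complex.re_ofReal_mul,
    re_mul_exp_descentPhase]
  congr 1
  ring

/-- **Auxiliary Lemma for Selection of Descent Direction.** For `u ≠ 0` and `k ≥ 1`, with
`G_k(z) = conj(u)·z^k + u·conj(z)^k`, `γ = 2·Re(u^(k−1))`, `δ = −2·Im(u^(k−1))`,
`c = max {|γ|, |δ|}` and the angle `θ` chosen as in the Robust Newton method, we have
`c > 0` and `G_k(α·u·e^(iθ)) = −c·|u|²·α^k < 0` for every `α > 0`. -/
theorem descent_direction (u : ℂ) (hu : u ≠ 0) (k : ℕ) (hk : 1 ≤ k)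
    (γ δ c θ : ℝ)
    (hγ : γ = 2 * (u ^ (k - 1)).re)
    (hδ : δ = -2 * (u ^ (k - 1)).im)
    (hc : c = max |γ| |δ|)
    (hθ : θ = if c = |γ| then (if γ < 0 then 0 else Real.pi / k)
          else (if δ < 0 then Real.pi / (2 * k) else 3 * Real.pi / (2 * k))) :
    0 < c ∧
    ∀ α : ℝ, 0 < α →
      (starRingEnd ℂ) u * (↑α * u * Complex.exp (↑θ * Complex.I)) ^ k +
        u * ((starRingEnd ℂ) (↑α * u * Complex.exp (↑θ * Complex.I))) ^ k =
        ((-(c * ‖u‖ ^ 2 * α ^ k) : ℝ) : ℂ) ∧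
      -(c * ‖u‖ ^ 2 * α ^ k) < 0 := by
  obtain ⟨n, rfl⟩ := Nat.exists_eq_add_of_le' hk
  rw [Nat.add_sub_cancel] at hγ hδ
  have hc_eq : c = 2 * max |(u ^ n).re| |(u ^ n).im| := by
    rw [hc, hγ, hδ, abs_mul, abs_mul, abs_neg, abs_two, mul_max_of_nonneg _ _ zero_le_two]
  have hc_pos : 0 < c :=
    hc_eq ▸ mul_pos two_pos (max_abs_re_abs_im_pos (pow_ne_zero n hu))
  have hphase : ((n + 1 : ℕ) : ℝ) * θ = descentPhase (u ^ n) := by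
    rw [descentPhase_eq_ite, ← hγ, ← hδ, ← hc, hθ]
    split_ifs
    · exact mul_zero _
    all_goals field_simp
  refine ⟨hc_pos, fun α hα => ⟨?_, ?_⟩⟩
  · rw [hc_eq]
    exact conjPowForm_eq_of_mul_eq_descentPhase u n α θ hphase
  · exact neg_neg_of_pos (by positivity)
end

section
/- Basins of attraction of RNM contain discs: Let p be a polynomial with complex coefficients of degree n ≥ 2 and let θ* ∈ ℂ be a root of p. Then there exists ρ > 0 such that for every seed z₀ with |z₀ − θ*| < ρ, the RNM orbit of z₀ converges to θ*; that is, the RNM basin of attraction of θ* contains an open disc centered at θ*. -/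
open Polynomial Filter Topology
open scoped Classical

noncomputable section

/-!
At a point with `p z ≠ 0` and `p' z ≠ 0` the Robust Newton step is the gradient step
`z ↦ z - u / (9 A²)` for `u = p z * conj (p' z)`, half the gradient of `|p|²`. Near a root `θ` of
multiplicity `m ≥ 1` one has `(z - θ) p' z = m p z + o(p z)`, so `⟪u, z - θ⟫ ≥ |p z|² / 2`. As
`|p'| ≤ A`, the quadratic term of the step is at most half of its linear term, and `|z - θ|²`
decreases by at least `|p z|² / (18 A²)`, which is bounded below by `c |z - θ|^(2 m)`.
-/

section DescentToFixedPoint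

theorem nonneg_of_continuous_of_pos {φ : ℝ → ℝ} (hφ : Continuous φ)
    (hφ_pos : ∀ a, 0 < a → 0 < φ a) {a : ℝ} (ha : 0 ≤ a) : 0 ≤ φ a :=
  le_on_closure (s := Set.Ioi 0) (fun b hb => (hφ_pos b hb).le) continuousOn_const
    hφ.continuousOn (by rwa [closure_Ioi])

theorem tendsto_zero_of_succ_le_sub {x : ℕ → ℝ} {φ : ℝ → ℝ} (hφ : Continuous φ)
    (hφ_pos : ∀ a, 0 < a → 0 < φ a) (hx : ∀ t, 0 ≤ x t)
    (hstep : ∀ t, x (t + 1) ≤ x t - φ (x t)) : Tendsto x atTop (𝓝 0) := by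
  have hanti : Antitone x := antitone_nat_of_succ_le fun t =>
    (hstep t).trans (sub_le_self _ (nonneg_of_continuous_of_pos hφ hφ_pos (hx t)))
  have hlim := tendsto_atTop_ciInf hanti ⟨0, Set.forall_mem_range.2 hx⟩
  set L := ⨅ t, x t
  have hL : 0 ≤ L := ge_of_tendsto' hlim hx
  have hfix : L ≤ L - φ L :=
    le_of_tendsto_of_tendsto' (hlim.comp (tendsto_add_atTop_nat 1))
      (hlim.sub ((hφ.tendsto L).comp hlim)) hstep
  obtain hL₀ | hL_pos := hL.eq_or_lt
  · rwa [← hL₀] at hlim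
  · linarith [hφ_pos L hL_pos]

theorem exists_ball_antitone_tendsto_iterate {α : Type*} [PseudoMetricSpace α] {f : α → α} {θ : α}
    {φ : ℝ → ℝ} (hφ : Continuous φ) (hφ_pos : ∀ a, 0 < a → 0 < φ a)
    (hf : ∀ᶠ z in 𝓝 θ, dist (f z) θ ^ 2 ≤ dist z θ ^ 2 - φ (dist z θ ^ 2)) :
    ∃ ρ > 0, ∀ z₀ ∈ Metric.ball θ ρ,
      Antitone (fun t => dist (f^[t] z₀) θ) ∧ Tendsto (fun t => f^[t] z₀) atTop (𝓝 θ) := by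
  obtain ⟨ρ, hρ, hball⟩ := Metric.eventually_nhds_iff_ball.1 hf
  have hcloser : ∀ z ∈ Metric.ball θ ρ, dist (f z) θ ≤ dist z θ := fun z hz =>
    have hdecrease := nonneg_of_continuous_of_pos hφ hφ_pos (sq_nonneg (dist z θ))
    le_of_sq_le_sq ((hball z hz).trans (sub_le_self _ hdecrease)) dist_nonneg
  have hmaps : Set.MapsTo f (Metric.ball θ ρ) (Metric.ball θ ρ) := fun z hz =>
    (hcloser z hz).trans_lt hz
  refine ⟨ρ, hρ, fun z₀ hz₀ => ?_⟩
  have hmem (t : ℕ) : f^[t] z₀ ∈ Metric.ball θ ρ := hmaps.iterate t hz₀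
  refine ⟨antitone_nat_of_succ_le fun t => ?_, ?_⟩
  · rw [Function.iterate_succ_apply']
    exact hcloser _ (hmem t)
  · have hsq : Tendsto (fun t => dist (f^[t] z₀) θ ^ 2) atTop (𝓝 0) :=
      tendsto_zero_of_succ_le_sub hφ hφ_pos (fun t => sq_nonneg _) fun t => by
        rw [Function.iterate_succ_apply']
        exact hball _ (hmem t)
    rw [tendsto_iff_dist_tendsto_zero]
    simpa [Real.sqrt_sq dist_nonneg] using hsq.sqrt

end DescentToFixedPoint

section InnerProduct

variable {E : Type*} [SeminormedAddCommGroup E] [InnerProductSpace ℝ E]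

theorem norm_sub_smul_sq_le_of_mul_norm_sq_le_inner {g w : E} {s : ℝ} (hs : 0 ≤ s)
    (h : s * ‖g‖ ^ 2 ≤ inner ℝ g w) : ‖w - s • g‖ ^ 2 ≤ ‖w‖ ^ 2 - s * inner ℝ g w := by
  have hexpand : ‖w - s • g‖ ^ 2 = ‖w‖ ^ 2 - 2 * (s * inner ℝ g w) + s * (s * ‖g‖ ^ 2) := by
    rw [norm_sub_sq_real, real_inner_smul_right, real_inner_comm, norm_smul, mul_pow,
      Real.norm_eq_abs, sq_abs]
    ring
  linarith [mul_le_mul_of_nonneg_left h hs]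

theorem sub_mul_norm_sq_le_inner {a b : E} {m ε : ℝ} (h : ‖b - m • a‖ ≤ ε * ‖a‖) :
    (m - ε) * ‖a‖ ^ 2 ≤ inner ℝ a b := by
  have hinner : inner ℝ a b = m * ‖a‖ ^ 2 + inner ℝ a (b - m • a) := by
    rw [inner_sub_right, real_inner_smul_right, real_inner_self_eq_norm_sq]
    ring
  have herr : |inner ℝ a (b - m • a)| ≤ ‖a‖ * (ε * ‖a‖) :=
    (abs_real_inner_le_norm _ _).trans (mul_le_mul_of_nonneg_left h (norm_nonneg a))
  linarith [neg_abs_le (inner ℝ a (b - m • a))]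

end InnerProduct

section RootAsymptotics

open Asymptotics

variable {𝕜 : Type*} [NormedField 𝕜] {p : 𝕜[X]}

theorem one_isBigO_eval {θ : 𝕜} (hθ : p.eval θ ≠ 0) :
    (fun _ => (1 : 𝕜)) =O[𝓝 θ] fun z => p.eval z :=
  isBigO_of_div_tendsto_nhds_of_ne_zero (by simpa using p.continuous.tendsto θ) hθ

theorem exists_eq_pow_rootMultiplicity_mul_and_eval_ne_zero (hp : p ≠ 0) (θ : 𝕜) :
    ∃ q : 𝕜[X], p = (X - C θ) ^ p.rootMultiplicity θ * q ∧ q.eval θ ≠ 0 := by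
  simpa only [dvd_iff_isRoot, IsRoot.def] using
    exists_eq_pow_rootMultiplicity_mul_and_not_dvd p hp θ

theorem sub_pow_rootMultiplicity_isBigO_eval (hp : p ≠ 0) (θ : 𝕜) :
    (fun z => (z - θ) ^ p.rootMultiplicity θ) =O[𝓝 θ] fun z => p.eval z := by
  obtain ⟨q, hpq, hq⟩ := exists_eq_pow_rootMultiplicity_mul_and_eval_ne_zero hp θ
  refine ((isBigO_refl (fun z => (z - θ) ^ p.rootMultiplicity θ) _).mul
    (one_isBigO_eval hq)).congr (fun z => mul_one _) fun z => ?_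
  conv_rhs => rw [hpq]
  simp only [eval_mul, eval_pow, eval_sub, eval_X, eval_C]

theorem sub_mul_eval_derivative_sub_pow_mul (q : 𝕜[X]) (θ z : 𝕜) (m : ℕ) :
    (z - θ) * (derivative ((X - C θ) ^ m * q)).eval z - m * ((X - C θ) ^ m * q).eval z =
      (z - θ) ^ m * ((z - θ) * q.derivative.eval z) := by
  cases m with
  | zero => simp
  | succ m =>
    simp only [derivative_mul, derivative_X_sub_C_pow, eval_add, eval_mul, eval_pow, eval_sub,
      eval_X, eval_C, add_tsub_cancel_right]
    ring

theorem sub_mul_eval_derivative_sub_isLittleO (p : 𝕜[X]) (θ : 𝕜) :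
    (fun z => (z - θ) * p.derivative.eval z - p.rootMultiplicity θ * p.eval z)
      =o[𝓝 θ] fun z => p.eval z := by
  obtain rfl | hp := eq_or_ne p 0
  · simp
  obtain ⟨q, hpq, hq⟩ := exists_eq_pow_rootMultiplicity_mul_and_eval_ne_zero hp θ
  have hcofactor : (fun z => (z - θ) * q.derivative.eval z) =o[𝓝 θ] fun z => q.eval z := by
    refine ((isLittleO_one_iff 𝕜).2 ?_).trans_isBigO (one_isBigO_eval hq)
    have hcont : Continuous fun z => (z - θ) * q.derivative.eval z := by fun_prop
    simpa using hcont.tendsto θ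
  generalize p.rootMultiplicity θ = m at hpq ⊢
  subst hpq
  refine ((isBigO_refl (fun z => (z - θ) ^ m) _).mul_isLittleO hcofactor).congr
    (fun z => (sub_mul_eval_derivative_sub_pow_mul q θ z m).symm) fun z => ?_
  simp only [eval_mul, eval_pow, eval_sub, eval_X, eval_C]

end RootAsymptotics

section Parameters

variable (p : ℂ[X]) (z : ℂ)

theorem norm_dEval_div_factorial_le_Amax (j : ℕ) :
    ‖dEval p j z‖ / j.factorial ≤ Amax p z := by
  have hle {i : ℕ} (hi : i ≤ p.natDegree) : ‖dEval p i z‖ / i.factorial ≤ Amax p z :=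
    Finset.le_sup' (fun i => ‖dEval p i z‖ / (i.factorial : ℝ))
      (Finset.mem_range.2 (Nat.lt_succ_of_le hi))
  obtain hj | hj := le_or_gt j p.natDegree
  · exact hle hj
  · have hzero : dEval p j z = 0 := by
      rw [dEval, iterate_derivative_eq_zero hj, eval_zero]
    rw [hzero, norm_zero, zero_div]
    exact le_trans (by positivity) (hle (Nat.zero_le _))

theorem Amax_nonneg : 0 ≤ Amax p z :=
  le_trans (by positivity) (norm_dEval_div_factorial_le_Amax p z 0)

theorem norm_eval_derivative_le_Amax : ‖p.derivative.eval z‖ ≤ Amax p z := by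
  simpa [dEval] using norm_dEval_div_factorial_le_Amax p z 1

theorem continuous_Amax : Continuous (Amax p) :=
  Continuous.finset_sup'_apply _ fun j _ => by
    unfold dEval
    fun_prop

theorem uPar_one :
    uPar p 1 z = p.eval z * (starRingEnd ℂ) (p.derivative.eval z) := by
  simp [uPar, dEval]

theorem norm_uPar_one_le : ‖uPar p 1 z‖ ≤ ‖p.eval z‖ * Amax p z := by
  rw [uPar_one, norm_mul, RCLike.norm_conj]
  exact mul_le_mul_of_nonneg_left (norm_eval_derivative_le_Amax p z) (norm_nonneg _)

variable {p z} in
theorem kIndex_eq_one (h : p.derivative.eval z ≠ 0) : kIndex p z = 1 := by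
  have hmem : 1 ∈ {j : ℕ | 1 ≤ j ∧ dEval p j z ≠ 0} := ⟨le_rfl, h⟩
  exact le_antisymm (Nat.sInf_le hmem) (Nat.sInf_mem ⟨1, hmem⟩).1

theorem cPar_one : cPar p 1 z = 2 := by
  simp [cPar, gammaPar, deltaPar]

theorem thetaPar_one : thetaPar p 1 z = Real.pi := by
  simp [thetaPar, cPar_one, gammaPar]

theorem CPar_one : CPar p 1 z = ‖uPar p 1 z‖ / (3 * Amax p z ^ 2) := by
  have hexponent : ‖uPar p 1 z‖ ^ ((2 : ℤ) - (1 : ℕ)) = ‖uPar p 1 z‖ := by simp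
  rw [CPar, cPar_one, hexponent]
  ring

end Parameters

section Iteration

variable {p : ℂ[X]} {z θ : ℂ}

-- Relies on the junk value `u / |u| = 0 / 0 = 0`, thanks to which `rnmOrbit` is a plain iteration.
theorem RN_eq_self_of_eval_eq_zero (h : p.eval z = 0) : RN p z = z := by
  simp [RN, rniWith, uPar, h]

theorem RN_eq_sub_smul_uPar_one (h : p.derivative.eval z ≠ 0) :
    RN p z = z - (1 / (9 * Amax p z ^ 2)) • uPar p 1 z := by
  rw [RN, kIndex_eq_one h, rniWith, thetaPar_one, CPar_one, Complex.exp_pi_mul_I,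
    Complex.real_smul]
  obtain hu | hu := eq_or_ne (uPar p 1 z) 0
  · simp [hu]
  · have hnorm : (‖uPar p 1 z‖ : ℂ) ≠ 0 := by simpa using hu
    push_cast
    field_simp
    ring

theorem rnmOrbit_eq_iterate (p : ℂ[X]) (z₀ : ℂ) (t : ℕ) : rnmOrbit p z₀ t = (RN p)^[t] z₀ := by
  induction t with
  | zero => rfl
  | succ t ih =>
    rw [Function.iterate_succ_apply', ← ih, rnmOrbit]
    split_ifs with h
    · exact (RN_eq_self_of_eval_eq_zero h).symm
    · rfl

theorem eventually_norm_eval_sq_le_inner_uPar_one (hp : p ≠ 0) (hroot : p.IsRoot θ) :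
    ∀ᶠ z in 𝓝 θ, ‖p.eval z‖ ^ 2 / 2 ≤ inner ℝ (uPar p 1 z) (z - θ) := by
  have hm : (1 : ℝ) ≤ p.rootMultiplicity θ := by
    exact_mod_cast (rootMultiplicity_pos hp).2 hroot
  filter_upwards [(sub_mul_eval_derivative_sub_isLittleO p θ).bound one_half_pos] with z hz
  have hinner : inner ℝ (uPar p 1 z) (z - θ) =
      inner ℝ (p.eval z) ((z - θ) * p.derivative.eval z) := by
    simp only [uPar_one, Complex.inner, map_mul, Complex.conj_conj]
    congr 1
    ring
  calc ‖p.eval z‖ ^ 2 / 2 ≤ (p.rootMultiplicity θ - 1 / 2) * ‖p.eval z‖ ^ 2 := by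
        nlinarith [sq_nonneg ‖p.eval z‖]
    _ ≤ inner ℝ (p.eval z) ((z - θ) * p.derivative.eval z) :=
        sub_mul_norm_sq_le_inner (by simpa using hz)
    _ = inner ℝ (uPar p 1 z) (z - θ) := hinner.symm

theorem norm_RN_sub_sq_le {M : ℝ} (hM : Amax p z ≤ M)
    (h : ‖p.eval z‖ ^ 2 / 2 ≤ inner ℝ (uPar p 1 z) (z - θ)) :
    ‖RN p z - θ‖ ^ 2 ≤ ‖z - θ‖ ^ 2 - ‖p.eval z‖ ^ 2 / (18 * M ^ 2) := by
  obtain hpz | hpz := eq_or_ne (p.eval z) 0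
  · simp [RN_eq_self_of_eval_eq_zero hpz, hpz]
  have hderiv : p.derivative.eval z ≠ 0 := by
    intro h₀
    rw [uPar_one, h₀, map_zero, mul_zero, inner_zero_left] at h
    exact absurd h (not_le.2 (by positivity))
  have hA : 0 < Amax p z := (norm_pos_iff.2 hderiv).trans_le (norm_eval_derivative_le_Amax p z)
  set s : ℝ := 1 / (9 * Amax p z ^ 2) with hs_def
  have hquad : s * ‖uPar p 1 z‖ ^ 2 ≤ inner ℝ (uPar p 1 z) (z - θ) :=
    calc s * ‖uPar p 1 z‖ ^ 2 ≤ s * (‖p.eval z‖ * Amax p z) ^ 2 := by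
          gcongr
          exact norm_uPar_one_le p z
      _ = ‖p.eval z‖ ^ 2 / 9 := by
          rw [hs_def]
          field_simp
      _ ≤ inner ℝ (uPar p 1 z) (z - θ) := by linarith [sq_nonneg ‖p.eval z‖]
  calc ‖RN p z - θ‖ ^ 2 = ‖z - θ - s • uPar p 1 z‖ ^ 2 := by
        rw [RN_eq_sub_smul_uPar_one hderiv, sub_right_comm]
    _ ≤ ‖z - θ‖ ^ 2 - s * inner ℝ (uPar p 1 z) (z - θ) :=
        norm_sub_smul_sq_le_of_mul_norm_sq_le_inner (by positivity) hquad
    _ ≤ ‖z - θ‖ ^ 2 - 1 / (9 * M ^ 2) * (‖p.eval z‖ ^ 2 / 2) := by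
        rw [hs_def]
        gcongr
    _ = ‖z - θ‖ ^ 2 - ‖p.eval z‖ ^ 2 / (18 * M ^ 2) := by ring

theorem exists_pos_eventually_norm_RN_sub_sq_le (hp : p ≠ 0) (hroot : p.IsRoot θ) :
    ∃ c > 0, ∀ᶠ z in 𝓝 θ,
      ‖RN p z - θ‖ ^ 2 ≤ ‖z - θ‖ ^ 2 - c * (‖z - θ‖ ^ 2) ^ p.rootMultiplicity θ := by
  obtain ⟨K, hK, hbound⟩ := (sub_pow_rootMultiplicity_isBigO_eval hp θ).exists_pos
  obtain ⟨M, hM⟩ := exists_gt (Amax p θ)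
  have hM_pos : 0 < M := (Amax_nonneg p θ).trans_lt hM
  refine ⟨1 / (18 * M ^ 2 * K ^ 2), by positivity, ?_⟩
  filter_upwards [hbound.bound, (continuous_Amax p).continuousAt.eventually_lt_const hM,
    eventually_norm_eval_sq_le_inner_uPar_one hp hroot] with z hz hzM hinner
  have hpow : (‖z - θ‖ ^ 2) ^ p.rootMultiplicity θ ≤ K ^ 2 * ‖p.eval z‖ ^ 2 := by
    rw [pow_right_comm, ← norm_pow, ← mul_pow]
    gcongr
  calc ‖RN p z - θ‖ ^ 2 ≤ ‖z - θ‖ ^ 2 - ‖p.eval z‖ ^ 2 / (18 * M ^ 2) :=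
        norm_RN_sub_sq_le hzM.le hinner
    _ = ‖z - θ‖ ^ 2 - 1 / (18 * M ^ 2 * K ^ 2) * (K ^ 2 * ‖p.eval z‖ ^ 2) := by
        field_simp
    _ ≤ ‖z - θ‖ ^ 2 - 1 / (18 * M ^ 2 * K ^ 2) * (‖z - θ‖ ^ 2) ^ p.rootMultiplicity θ := by
        gcongr

theorem rnm_basin_contains_disc_general (hp : p ≠ 0) (hroot : p.eval θ = 0) :
    ∃ ρ > 0, ∀ z₀ : ℂ, ‖z₀ - θ‖ < ρ →
      Antitone (fun t => ‖rnmOrbit p z₀ t - θ‖) ∧ Tendsto (rnmOrbit p z₀) atTop (𝓝 θ) := by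
  obtain ⟨c, hc, hdescent⟩ := exists_pos_eventually_norm_RN_sub_sq_le hp hroot
  obtain ⟨ρ, hρ, hball⟩ := exists_ball_antitone_tendsto_iterate (f := RN p) (θ := θ)
    (φ := fun a => c * a ^ p.rootMultiplicity θ) (by fun_prop) (fun a ha => by positivity)
    (by simpa only [dist_eq_norm] using hdescent)
  refine ⟨ρ, hρ, fun z₀ hz₀ => ?_⟩
  simpa only [← rnmOrbit_eq_iterate, dist_eq_norm] using hball z₀ (mem_ball_iff_norm.2 hz₀)

end Iteration

/-- **Basins of attraction of RNM contain discs.** For every root `θ*` of `p` there exists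
`ρ > 0` such that the RNM orbit of every seed `z₀` with `|z₀ − θ*| < ρ` converges to `θ*`. -/
theorem rnm_basin_contains_disc (p : Polynomial ℂ) (hdeg : 2 ≤ p.natDegree)
    (θstar : ℂ) (hroot : p.eval θstar = 0) :
    ∃ ρ : ℝ, 0 < ρ ∧ ∀ z₀ : ℂ, ‖z₀ - θstar‖ < ρ →
      Filter.Tendsto (rnmOrbit p z₀) Filter.atTop (nhds θstar) := by
  obtain ⟨ρ, hρ, hball⟩ :=
    rnm_basin_contains_disc_general (ne_zero_of_natDegree_gt hdeg) hroot
  exact ⟨ρ, hρ, fun z₀ hz₀ => (hball z₀ hz₀).2⟩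
end
end
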